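/- Suppose L is symmetric (L y y' = L y' y for all y, y'), and let F_M(v) = sup_{q ∈ Δ} (⟨v, q⟩ + H_M(q)) with subdifferential ∂F_M(v) = {g : Y → ℝ | F_M(u) ≥ F_M(v) + ⟨g, u − v⟩ for all u}. If for some v : Y → ℝ the set ∂F_M(v) is a singleton {q}, then there exist y, y' ∈ Y (possibly equal) such that q = (e_y + e_{y'}) / 2, where e_y is the indicator vector of y. -/

import Mathlib

open Finset Set

variable {Y : Type*} [Fintype Y] [DecidableEq Y] [Nonempty Y]

/-- Probability simplex over `Y`. -/
def simplexSet (Y : Type*) [Fintype Y] : Set (Y → ℝ) :=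
  {q | (∀ y, 0 ≤ q y) ∧ ∑ y, q y = 1}

/-- Bayes risk of the discrete loss `L`. -/
noncomputable def HL (L : Y → Y → ℝ) (q : Y → ℝ) : ℝ :=
  ⨅ y : Y, ∑ y', L y y' * q y'

/-- Optimal-label set. -/
noncomputable def ystar (L : Y → Y → ℝ) (q : Y → ℝ) : Set Y :=
  {y | ∑ y', L y y' * q y' = HL L q}

/-- Prediction set of label `y`. -/
noncomputable def predSet (L : Y → Y → ℝ) (y : Y) : Set (Y → ℝ) :=
  {q ∈ simplexSet Y | y ∈ ystar L q}

/-- Max-Margin loss. -/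
noncomputable def SM (L : Y → Y → ℝ) (v : Y → ℝ) (y : Y) : ℝ :=
  ⨆ y' : Y, (L y y' + v y' - v y)

/-- Bayes risk of the Max-Margin loss. -/
noncomputable def HM (L : Y → Y → ℝ) (q : Y → ℝ) : ℝ :=
  ⨅ v : Y → ℝ, ∑ y, q y * SM L v y

/-- Conditional-risk minimizers of the Max-Margin loss. -/
noncomputable def vstarM (L : Y → Y → ℝ) (q : Y → ℝ) : Set (Y → ℝ) :=
  {v | ∑ y, q y * SM L v y = HM L q}

/-- Restricted-Max-Margin loss. -/
noncomputable def SRM (L : Y → Y → ℝ) (v : Y → ℝ) (y : Y) : ℝ :=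
  sSup ((fun q => ∑ y', L y y' * q y' + ∑ z, v z * q z) '' predSet L y) - v y

/-- Bayes risk of the Restricted-Max-Margin loss. -/
noncomputable def HRM (L : Y → Y → ℝ) (q : Y → ℝ) : ℝ :=
  ⨅ v : Y → ℝ, ∑ y, q y * SRM L v y

/-- Conditional-risk minimizers of the Restricted-Max-Margin loss. -/
noncomputable def vstarRM (L : Y → Y → ℝ) (q : Y → ℝ) : Set (Y → ℝ) :=
  {v | ∑ y, q y * SRM L v y = HRM L q}

/-- Max-Min-Margin loss. -/
noncomputable def SMM (L : Y → Y → ℝ) (v : Y → ℝ) (y : Y) : ℝ :=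
  sSup ((fun q => (⨅ z : Y, ∑ y', L z y' * q y') + ∑ z, v z * q z) '' simplexSet Y) - v y

/-- Bayes risk of the Max-Min-Margin loss. -/
noncomputable def HMM (L : Y → Y → ℝ) (q : Y → ℝ) : ℝ :=
  ⨅ v : Y → ℝ, ∑ y, q y * SMM L v y

/-- Transportation polytope `U(q, q)`. -/
def Upoly (q : Y → ℝ) : Set (Y → Y → ℝ) :=
  {Q | (∀ y y', 0 ≤ Q y y') ∧ (∀ y, ∑ y', Q y y' = q y) ∧ (∀ y', ∑ y, Q y y' = q y')}

/-- The constraint set `C_L`. -/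
def CL (L : Y → Y → ℝ) : Set (Y → Y → ℝ) :=
  {Q | ∀ y z : Y, ∑ y', L y y' * Q y y' ≤ ∑ y', L z y' * Q y y'}

/-- Fenchel-type conjugate of the negative Max-Margin Bayes risk. -/
noncomputable def FM (L : Y → Y → ℝ) (v : Y → ℝ) : ℝ :=
  sSup ((fun q => (∑ z, v z * q z) + HM L q) '' simplexSet Y)

/-- Subdifferential of `F_M` at `v`. -/
noncomputable def subdiffFM (L : Y → Y → ℝ) (v : Y → ℝ) : Set (Y → ℝ) :=
  {g | ∀ u : Y → ℝ, FM L v + ∑ z, g z * (u z - v z) ≤ FM L u}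

/-- The average of the indicator vectors of two labels. -/
noncomputable def midIndicator (y y' : Y) : Y → ℝ := fun z =>
  ((if z = y then (1 : ℝ) else 0) + (if z = y' then (1 : ℝ) else 0)) / 2

lemma sum_midIndicator_mul (y y' : Y) (u : Y → ℝ) :
    ∑ z, midIndicator y y' z * u z = (u y + u y') / 2 := by
  have h : ∀ z, midIndicator y y' z * u z =
      ((if z = y then u z else 0) + (if z = y' then u z else 0)) / 2 := by
    intro z
    unfold midIndicator
    split_ifs <;> ring
  simp only [h, ← Finset.sum_div, Finset.sum_add_distrib, Finset.sum_ite_eq', Finset.mem_univ,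
    if_true]

lemma midIndicator_mem_simplexSet (y y' : Y) : midIndicator y y' ∈ simplexSet Y := by
  refine ⟨fun z => ?_, ?_⟩
  · unfold midIndicator
    split_ifs <;> norm_num
  · simpa using sum_midIndicator_mul y y' (fun _ => (1 : ℝ))

lemma le_SM (L : Y → Y → ℝ) (v : Y → ℝ) (y y' : Y) : L y y' + v y' - v y ≤ SM L v y :=
  le_ciSup (f := fun y' => L y y' + v y' - v y) (Set.finite_range _).bddAbove y'

lemma SM_nonneg {L : Y → Y → ℝ} (hnonneg : ∀ y y', 0 ≤ L y y') (v : Y → ℝ) (y : Y) :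
    0 ≤ SM L v y := by
  linarith [le_SM L v y y, hnonneg y y]

lemma HM_le {L : Y → Y → ℝ} (hnonneg : ∀ y y', 0 ≤ L y y') {q : Y → ℝ}
    (hq : q ∈ simplexSet Y) (v : Y → ℝ) : HM L q ≤ ∑ y, q y * SM L v y := by
  refine ciInf_le (f := fun v => ∑ y, q y * SM L v y) ⟨0, ?_⟩ v
  rintro _ ⟨w, rfl⟩
  exact Finset.sum_nonneg fun y _ => mul_nonneg (hq.1 y) (SM_nonneg hnonneg w y)

lemma le_HM_midIndicator {L : Y → Y → ℝ} (hsymm : ∀ y y', L y y' = L y' y) (y y' : Y) :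
    L y y' ≤ HM L (midIndicator y y') := by
  refine le_ciInf fun w => ?_
  rw [sum_midIndicator_mul]
  linarith [le_SM L w y y', le_SM L w y' y, hsymm y y']

/-- Testing the Bayes risk at `v / 2` bounds the objective defining `FM`. -/
lemma sum_mul_add_HM_le {L : Y → Y → ℝ} (hnonneg : ∀ y y', 0 ≤ L y y') {v : Y → ℝ} {c : ℝ}
    (hc : ∀ y y', L y y' + (v y + v y') / 2 ≤ c) {q : Y → ℝ} (hq : q ∈ simplexSet Y) :
    ∑ z, v z * q z + HM L q ≤ c := by
  have hSM : ∀ y, SM L (fun z => v z / 2) y ≤ c - v y := fun y =>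
    ciSup_le fun y' => by linarith [hc y y']
  calc ∑ z, v z * q z + HM L q
      ≤ ∑ z, v z * q z + ∑ y, q y * SM L (fun z => v z / 2) y := by
        gcongr
        exact HM_le hnonneg hq _
    _ ≤ ∑ z, v z * q z + ∑ y, q y * (c - v y) := by
        gcongr with y
        · exact hq.1 y
        · exact hSM y
    _ = ∑ y, q y * c := by
        rw [← Finset.sum_add_distrib]
        exact Finset.sum_congr rfl fun y _ => by ring
    _ = c := by rw [← Finset.sum_mul, hq.2, one_mul]

lemma FM_le {L : Y → Y → ℝ} (hnonneg : ∀ y y', 0 ≤ L y y') {v : Y → ℝ} {c : ℝ}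
    (hc : ∀ y y', L y y' + (v y + v y') / 2 ≤ c) : FM L v ≤ c := by
  have y := Classical.arbitrary Y
  refine csSup_le ⟨_, _, midIndicator_mem_simplexSet y y, rfl⟩ ?_
  rintro _ ⟨q, hq, rfl⟩
  exact sum_mul_add_HM_le hnonneg hc hq

lemma exists_forall_pair_le (L : Y → Y → ℝ) (v : Y → ℝ) :
    ∃ y y', ∀ z z', L z z' + (v z + v z') / 2 ≤ L y y' + (v y + v y') / 2 := by
  obtain ⟨p, hp⟩ := Finite.exists_max fun p : Y × Y => L p.1 p.2 + (v p.1 + v p.2) / 2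
  exact ⟨p.1, p.2, fun z z' => hp (z, z')⟩

lemma le_FM {L : Y → Y → ℝ} (hnonneg : ∀ y y', 0 ≤ L y y') (hsymm : ∀ y y', L y y' = L y' y)
    (v : Y → ℝ) (y y' : Y) : L y y' + (v y + v y') / 2 ≤ FM L v := by
  obtain ⟨a, b, hab⟩ := exists_forall_pair_le L v
  have hle : ∑ z, v z * midIndicator y y' z + HM L (midIndicator y y') ≤ FM L v := by
    refine le_csSup ⟨L a b + (v a + v b) / 2, ?_⟩ ⟨_, midIndicator_mem_simplexSet y y', rfl⟩
    rintro _ ⟨q, hq, rfl⟩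
    exact sum_mul_add_HM_le hnonneg hab hq
  have hsum : ∑ z, v z * midIndicator y y' z = (v y + v y') / 2 := by
    simpa only [mul_comm] using sum_midIndicator_mul y y' v
  linarith [le_HM_midIndicator hsymm y y']

lemma exists_midIndicator_mem_subdiffFM {L : Y → Y → ℝ} (hnonneg : ∀ y y', 0 ≤ L y y')
    (hsymm : ∀ y y', L y y' = L y' y) (v : Y → ℝ) :
    ∃ y y', midIndicator y y' ∈ subdiffFM L v := by
  obtain ⟨y, y', hmax⟩ := exists_forall_pair_le L v
  refine ⟨y, y', fun u => ?_⟩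
  rw [sum_midIndicator_mul y y' fun z => u z - v z]
  linarith [FM_le hnonneg hmax, le_FM hnonneg hsymm u y y']

theorem stmt17 (Y : Type*) [Fintype Y] [DecidableEq Y] [Nonempty Y] (L : Y → Y → ℝ)
    (hcard : 2 ≤ Fintype.card Y)
    (hnonneg : ∀ y y', 0 ≤ L y y')
    (hzero : ∀ y y', L y y' = 0 ↔ y = y')
    (hsymm : ∀ y y', L y y' = L y' y)
    (v q : Y → ℝ)
    (hsingleton : subdiffFM L v = {q}) :
    ∃ y y' : Y, q = fun z =>
      ((if z = y then (1 : ℝ) else 0) + (if z = y' then (1 : ℝ) else 0)) / 2 := by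
  obtain ⟨y, y', hmem⟩ := exists_midIndicator_mem_subdiffFM hnonneg hsymm v
  rw [hsingleton] at hmem
  exact ⟨y, y', (Set.mem_singleton_iff.mp hmem).symm⟩
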